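/- Let n ≥ 2 and let a = (a_1, a_2, a_3, …, a_n) be a parking function of length n with a_1 = a_2. Then the tuple (a_1, a_2 + 1, a_3, …, a_n), obtained from a by increasing the second entry by one, is again a parking function of length n (in particular a_2 + 1 ≤ n − 1). -/

import Mathlib

/-!
Write `c` for the common value of the first two entries. Since `c ≤ n`, at least `c` entries are
`< c`; together with the two entries equal to `c`, at least `c + 2` entries are `< c + 1`
(`IsPF.add_two_le_card`). Hence `c + 2 ≤ n`. Raising one entry from `c` to `c + 1` changes the
count of entries `< k` only for `k = c + 1`, where it drops by one, to at least `c + 1`.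
-/

/-- A parking function of length `n`: a function `a : Fin n → ℕ` such that for
every `k ≤ n`, at least `k` of the entries are `< k`.  (This forces all entries
to lie in `{0, …, n-1}`.) -/
def IsPF (n : ℕ) (a : Fin n → ℕ) : Prop :=
  ∀ k : ℕ, k ≤ n → k ≤ (Finset.univ.filter (fun i => a i < k)).card

theorem IsPF.lt {n : ℕ} {a : Fin n → ℕ} (h : IsPF n a) (i : Fin n) : a i < n := by
  have hcard : (Finset.univ.filter (fun i => a i < n)).card = (Finset.univ : Finset (Fin n)).card :=
    le_antisymm (Finset.card_filter_le _ _) (by simpa using h n le_rfl)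
  exact Finset.card_filter_eq_iff.1 hcard i (Finset.mem_univ i)

/-- Two positions with the same value leave one entry to spare at the threshold just above
that value. -/
theorem IsPF.add_two_le_card {n : ℕ} {a : Fin n → ℕ} (h : IsPF n a) {i j : Fin n}
    (hij : i ≠ j) (heq : a i = a j) :
    a j + 2 ≤ (Finset.univ.filter (fun l => a l < a j + 1)).card := by
  have hdisj : Disjoint (Finset.univ.filter (fun l => a l < a j)) {i, j} := by
    simp [Finset.disjoint_insert_right, heq]
  have hsub : Finset.univ.filter (fun l => a l < a j) ∪ {i, j} ⊆
      Finset.univ.filter (fun l => a l < a j + 1) := by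
    intro l hl
    simp only [Finset.mem_union, Finset.mem_filter, Finset.mem_univ, true_and,
      Finset.mem_insert, Finset.mem_singleton] at hl ⊢
    rcases hl with hl | rfl | rfl <;> omega
  have hle := Finset.card_le_card hsub
  rw [Finset.card_union_of_disjoint hdisj, Finset.card_pair hij] at hle
  have := h (a j) (h.lt j).le
  omega

/-- If `a` is a parking function with `a_1 = a_2`, then increasing the second
entry by one again yields a parking function (and in particular `a_2 + 1 ≤ n - 1`). -/
theorem parking_function_bump_second (n : ℕ) (hn : 2 ≤ n) (a : Fin n → ℕ)
    (h : IsPF n a) (heq : a ⟨0, by omega⟩ = a ⟨1, by omega⟩) :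
    IsPF n (Function.update a ⟨1, by omega⟩ (a ⟨1, by omega⟩ + 1)) ∧
      a ⟨1, by omega⟩ + 1 ≤ n - 1 := by
  have key := h.add_two_le_card (by simp) heq
  generalize (⟨1, by omega⟩ : Fin n) = j at key ⊢
  refine ⟨fun k hk => ?_, ?_⟩
  · by_cases hkc : k = a j + 1
    · subst hkc
      have hsub : (Finset.univ.filter (fun l => a l < a j + 1)).erase j ⊆
          Finset.univ.filter (fun l => Function.update a j (a j + 1) l < a j + 1) := by
        intro l hl
        simp only [Finset.mem_erase, Finset.mem_filter, Finset.mem_univ, true_and] at hl ⊢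
        rw [Function.update_of_ne hl.1]
        exact hl.2
      have h1 := Finset.card_le_card hsub
      have h2 := Finset.pred_card_le_card_erase
        (s := Finset.univ.filter (fun l => a l < a j + 1)) (a := j)
      omega
    · refine (h k hk).trans (Finset.card_le_card fun l hl => ?_)
      simp only [Finset.mem_filter, Finset.mem_univ, true_and] at hl ⊢
      by_cases hlj : l = j
      · subst hlj
        rw [Function.update_self]
        omega
      · rwa [Function.update_of_ne hlj]
  · have := key.trans (Finset.card_filter_le _ _)
    rw [Finset.card_univ, Fintype.card_fin] at this
    omega
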